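/- Secrecy-leakage converse bound (small key regime): under the converse setup, I(X̃^n; W | Z^n) ≥ Σ_{i=1}^n ( I(U_i; X̃_i | Z_i) + [I(U_i; Z_i | V_i) − I(U_i; Y_i | V_i)]^- ) − H(K). -/

import Mathlib

open MeasureTheory

noncomputable section

/-- Probability mass `P[X = x]` of a finitely-valued random variable `X` on `(Ω, μ)`. -/
def pmass {Ω : Type*} [MeasurableSpace Ω] (μ : Measure Ω) {α : Type*}
    (X : Ω → α) (x : α) : ℝ :=
  (μ (X ⁻¹' {x})).toReal

/-- Shannon entropy `H(X)` (in nats) of a finitely-valued random variable. -/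
def entropyRV {Ω : Type*} [MeasurableSpace Ω] (μ : Measure Ω) {α : Type*} [Fintype α]
    (X : Ω → α) : ℝ :=
  ∑ x : α, Real.negMulLog (pmass μ X x)

/-- Conditional Shannon entropy `H(X | Y)`. -/
def condEntropyRV {Ω : Type*} [MeasurableSpace Ω] (μ : Measure Ω) {α β : Type*}
    [Fintype α] [Fintype β] (X : Ω → α) (Y : Ω → β) : ℝ :=
  entropyRV μ (fun ω => (X ω, Y ω)) - entropyRV μ Y

/-- Mutual information `I(X;Y)`. -/
def mutualInfoRV {Ω : Type*} [MeasurableSpace Ω] (μ : Measure Ω) {α β : Type*}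
    [Fintype α] [Fintype β] (X : Ω → α) (Y : Ω → β) : ℝ :=
  entropyRV μ X + entropyRV μ Y - entropyRV μ (fun ω => (X ω, Y ω))

/-- Conditional mutual information `I(X;Y|Z)`. -/
def condMutualInfoRV {Ω : Type*} [MeasurableSpace Ω] (μ : Measure Ω) {α β γ : Type*}
    [Fintype α] [Fintype β] [Fintype γ] (X : Ω → α) (Y : Ω → β) (Z : Ω → γ) : ℝ :=
  entropyRV μ (fun ω => (X ω, Z ω)) + entropyRV μ (fun ω => (Y ω, Z ω))
    - entropyRV μ Z - entropyRV μ (fun ω => (X ω, Y ω, Z ω))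

/-- Expected value `E[f(X)]` of a function of a finitely-valued random variable. -/
def expVal {Ω : Type*} [MeasurableSpace Ω] (μ : Measure Ω) {α : Type*} [Fintype α]
    (X : Ω → α) (f : α → ℝ) : ℝ :=
  ∑ a : α, pmass μ X a * f a

/-- Independence of two finitely-valued random variables, via their joint mass. -/
def IndepRV {Ω : Type*} [MeasurableSpace Ω] (μ : Measure Ω) {α β : Type*}
    (X : Ω → α) (Y : Ω → β) : Prop :=
  ∀ a b, pmass μ (fun ω => (X ω, Y ω)) (a, b) = pmass μ X a * pmass μ Y b

/-- Conditional independence of `A` and `C` given `B` (the Markov chain `A − B − C`)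
for finitely-valued random variables, via joint masses. -/
def CondIndepRV {Ω : Type*} [MeasurableSpace Ω] (μ : Measure Ω) {α β γ : Type*}
    (A : Ω → α) (B : Ω → β) (C : Ω → γ) : Prop :=
  ∀ a b c,
    pmass μ (fun ω => (A ω, B ω, C ω)) (a, b, c) * pmass μ B b
      = pmass μ (fun ω => (A ω, B ω)) (a, b) * pmass μ (fun ω => (B ω, C ω)) (b, c)

/-- `X` is uniformly distributed on its (finite) alphabet. -/
def UniformRV {Ω : Type*} [MeasurableSpace Ω] (μ : Measure Ω) {α : Type*} [Fintype α]
    (X : Ω → α) : Prop :=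
  ∀ x, pmass μ X x = 1 / (Fintype.card α : ℝ)

/-- The sequence `S = (S_1, …, S_n)` is i.i.d. with single-letter pmf `p`. -/
def HasIIDLaw {Ω : Type*} [MeasurableSpace Ω] (μ : Measure Ω) {α : Type*} {n : ℕ}
    (S : Ω → Fin n → α) (p : α → ℝ) : Prop :=
  ∀ v : Fin n → α, pmass μ S v = ∏ i, p (v i)

/-- `[a]⁻ = min {a, 0}`. -/
def negPartR (a : ℝ) : ℝ := min a 0

/-!
Write `V_i = (W, Y_{i+1}^n, Z^{i-1})` and `B_i = (W, K, Y_{i+1}^n, X̃^{i-1})`. Given `X̃_i`, the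
rest of letter `i` is independent of everything outside position `i`, so exchanging `X̃_i` with
`Z_i` gives `I(U_i; X̃_i | Z_i) = H(X̃_i) - H(Z_i) + H(Z_i | U_i) - H(X̃_i | U_i)`. Adding
`I(U_i; Z_i | V_i) - I(U_i; Y_i | V_i)` cancels `H(Z_i | U_i)` and leaves
`H(Y_i | U_i) - H(X̃_i | U_i)`, which is at most `H(Y_i | B_i) - H(X̃_i | B_i)` because `X̃^{i-1}`
makes `X^{i-1}` and `Z^{i-1}` irrelevant for `X̃_i`. The sums of `H(Z_i | V_i) - H(Y_i | V_i)` and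
of `H(X̃_i | B_i) - H(Y_i | B_i)` are evaluated by the Csiszár sum identity. What remains is a
comparison of block entropies, where the key enters through `H(W | X̃^n, Z^n) ≤ H(K)`.
-/

open ProbabilityTheory Function

lemma exists_eq_comp_of_factorsThrough {Ω α β : Type*} [Nonempty Ω] {X : Ω → α} {Y : Ω → β}
    (h : Y.FactorsThrough X) : ∃ f : α → β, Y = f ∘ X :=
  have : Nonempty β := .map Y ‹_›
  (factorsThrough_iff Y).1 h

lemma measurable_of_factorsThrough {Ω α β : Type*} [MeasurableSpace Ω] [Finite α]
    [MeasurableSpace α] [MeasurableSingletonClass α] [MeasurableSpace β] {X : Ω → α} {Y : Ω → β}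
    (hX : Measurable X) (h : Y.FactorsThrough X) : Measurable Y := by
  rcases isEmpty_or_nonempty Ω
  · exact measurable_of_empty Y
  · obtain ⟨f, rfl⟩ := exists_eq_comp_of_factorsThrough h
    exact (measurable_of_finite f).comp hX

section Entropy

variable {Ω : Type*} [MeasurableSpace Ω] {μ : Measure Ω}
  {α β γ : Type*} {X : Ω → α} {Y : Ω → β} {Z : Ω → γ}

lemma pmass_nonneg (X : Ω → α) (x : α) : 0 ≤ pmass μ X x :=
  ENNReal.toReal_nonneg

lemma pmass_le_pmass_comp [IsFiniteMeasure μ] (X : Ω → α) (f : α → β) (x : α) :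
    pmass μ X x ≤ pmass μ (fun ω => f (X ω)) (f x) :=
  measureReal_mono fun _ hω => congrArg f hω

lemma pmass_comp [IsFiniteMeasure μ] [Fintype α] [MeasurableSpace α] [MeasurableSingletonClass α]
    [DecidableEq β] (hX : Measurable X) (f : α → β) (y : β) :
    pmass μ (fun ω => f (X ω)) y = ∑ x with f x = y, pmass μ X x := by
  have hfiber : (fun ω => f (X ω)) ⁻¹' {y} = X ⁻¹' ↑({x | f x = y} : Finset α) := by
    ext ω
    simp
  rw [pmass, hfiber]
  exact (sum_measureReal_preimage_singleton _ fun x _ => hX (measurableSet_singleton x)).symm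

lemma sum_pmass [IsProbabilityMeasure μ] [Fintype α] [MeasurableSpace α]
    [MeasurableSingletonClass α] (hX : Measurable X) : ∑ x, pmass μ X x = 1 :=
  (sum_measureReal_preimage_singleton _ fun x _ => hX (measurableSet_singleton x)).trans (by simp)

lemma sum_pmass_comp_mul [IsFiniteMeasure μ] [Fintype α] [MeasurableSpace α]
    [MeasurableSingletonClass α] [Fintype β] (hX : Measurable X) (f : α → β) (g : β → ℝ) :
    ∑ y, pmass μ (fun ω => f (X ω)) y * g y = ∑ x, pmass μ X x * g (f x) := by
  classical
  simp_rw [pmass_comp hX f, Finset.sum_mul]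
  rw [← Finset.sum_fiberwise (g := f)]
  exact Finset.sum_congr rfl fun y _ => Finset.sum_congr rfl fun x hx => by
    rw [(Finset.mem_filter.1 hx).2]

lemma sum_pmass_prodMk [IsFiniteMeasure μ] [Fintype α] [MeasurableSpace α]
    [MeasurableSingletonClass α] (hX : Measurable X) (Y : Ω → β) (y : β) :
    ∑ x, pmass μ (fun ω => (X ω, Y ω)) (x, y) = pmass μ Y y := by
  have hslice (x : α) : pmass μ (fun ω => (X ω, Y ω)) (x, y)
      = (μ.restrict (Y ⁻¹' {y})).real (X ⁻¹' {x}) := by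
    rw [measureReal_restrict_apply (hX (measurableSet_singleton x)), pmass]
    congr 2
    ext ω
    simp
  simp_rw [hslice]
  rw [sum_measureReal_preimage_singleton _ fun x _ => hX (measurableSet_singleton x)]
  simp [pmass, measureReal_def]

lemma entropyRV_comp [IsFiniteMeasure μ] [Fintype α] [MeasurableSpace α]
    [MeasurableSingletonClass α] [Fintype β] (hX : Measurable X) (f : α → β) :
    entropyRV μ (fun ω => f (X ω))
      = -∑ x, pmass μ X x * Real.log (pmass μ (fun ω => f (X ω)) (f x)) := by
  rw [← sum_pmass_comp_mul hX f fun y => Real.log (pmass μ (fun ω => f (X ω)) y)]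
  simp [entropyRV, Real.negMulLog]

lemma entropyRV_comp_le [IsFiniteMeasure μ] [Fintype α] [MeasurableSpace α]
    [MeasurableSingletonClass α] [Fintype β] (hX : Measurable X) (f : α → β) :
    entropyRV μ (fun ω => f (X ω)) ≤ entropyRV μ X := by
  rw [entropyRV_comp hX f, show entropyRV μ X = _ from entropyRV_comp hX id, neg_le_neg_iff]
  refine Finset.sum_le_sum fun x _ => ?_
  rcases (pmass_nonneg (μ := μ) X x).eq_or_lt with hx | hx
  · simp [← hx]
  · exact mul_le_mul_of_nonneg_left (Real.log_le_log hx (pmass_le_pmass_comp X f x)) hx.le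

lemma mul_log_sub_log_le {p q : ℝ} (hp : 0 ≤ p) (hq : 0 ≤ q) (hpq : q = 0 → p = 0) :
    p * (Real.log q - Real.log p) ≤ q - p := by
  rcases hp.eq_or_lt with rfl | hp
  · simpa using hq
  · have hq : 0 < q := hq.lt_of_ne' fun h => hp.ne' (hpq h)
    have hlog := mul_le_mul_of_nonneg_left (Real.log_le_sub_one_of_pos (div_pos hq hp)) hp.le
    rwa [Real.log_div hq.ne' hp.ne', mul_sub_one, mul_div_cancel₀ _ hp.ne'] at hlog

lemma gibbs_inequality {ι : Type*} {s : Finset ι} {p q : ι → ℝ} (hp : ∀ i ∈ s, 0 ≤ p i)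
    (hq : ∀ i ∈ s, 0 ≤ q i) (hpq : ∀ i ∈ s, q i = 0 → p i = 0)
    (hsum : ∑ i ∈ s, q i ≤ ∑ i ∈ s, p i) :
    ∑ i ∈ s, p i * Real.log (q i) ≤ ∑ i ∈ s, p i * Real.log (p i) := by
  have hterm : ∑ i ∈ s, p i * (Real.log (q i) - Real.log (p i)) ≤ ∑ i ∈ s, (q i - p i) :=
    Finset.sum_le_sum fun i hi => mul_log_sub_log_le (hp i hi) (hq i hi) (hpq i hi)
  simp only [mul_sub, Finset.sum_sub_distrib] at hterm
  linarith

lemma sum_pmass_mul_pmass_div_pmass [IsFiniteMeasure μ] [Fintype α] [MeasurableSpace α]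
    [MeasurableSingletonClass α] [Fintype β] [MeasurableSpace β] [MeasurableSingletonClass β]
    [Fintype γ] (hX : Measurable X) (hY : Measurable Y) (Z : Ω → γ) :
    ∑ t : α × β × γ, pmass μ (fun ω => (X ω, Z ω)) (t.1, t.2.2)
        * pmass μ (fun ω => (Y ω, Z ω)) t.2 / pmass μ Z t.2.2
      = ∑ z, pmass μ Z z := by
  rw [Fintype.sum_prod_type_right, Fintype.sum_prod_type_right]
  calc ∑ z, ∑ y, ∑ x, pmass μ (fun ω => (X ω, Z ω)) (x, z)
          * pmass μ (fun ω => (Y ω, Z ω)) (y, z) / pmass μ Z z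
      = ∑ z, pmass μ Z z * pmass μ Z z / pmass μ Z z := by
        simp only [← Finset.sum_div, ← Finset.sum_mul, ← Finset.mul_sum, sum_pmass_prodMk hX,
          sum_pmass_prodMk hY]
    _ = ∑ z, pmass μ Z z := by simp only [mul_self_div_self]

lemma mul_log_mul_div {p a b c : ℝ} (hp : 0 ≤ p) (ha : p ≤ a) (hb : p ≤ b) (hc : p ≤ c) :
    p * Real.log (a * b / c) = p * Real.log a + p * Real.log b - p * Real.log c := by
  rcases hp.eq_or_lt with rfl | hp
  · simp
  · have ha := (hp.trans_le ha).ne'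
    have hb := (hp.trans_le hb).ne'
    rw [Real.log_div (mul_ne_zero ha hb) (hp.trans_le hc).ne', Real.log_mul ha hb]
    ring

variable [Fintype α] [MeasurableSpace α] [MeasurableSingletonClass α]
  [Fintype β] [MeasurableSpace β] [MeasurableSingletonClass β]
  [Fintype γ] [MeasurableSpace γ] [MeasurableSingletonClass γ]

-- Gibbs' inequality for the joint law of `(X, Y, Z)` against `P_{XZ} P_{YZ} / P_Z`.
lemma condMutualInfoRV_nonneg [IsFiniteMeasure μ] (hX : Measurable X) (hY : Measurable Y)
    (hZ : Measurable Z) : 0 ≤ condMutualInfoRV μ X Y Z := by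
  set T : Ω → α × β × γ := fun ω => (X ω, Y ω, Z ω)
  have hT : Measurable T := by fun_prop
  set p := pmass μ T
  set pXZ := pmass μ fun ω => (X ω, Z ω)
  set pYZ := pmass μ fun ω => (Y ω, Z ω)
  set pZ := pmass μ Z
  have hp (t) : 0 ≤ p t := pmass_nonneg T t
  have hpXZ (t) : p t ≤ pXZ (t.1, t.2.2) := pmass_le_pmass_comp T (fun t => (t.1, t.2.2)) t
  have hpYZ (t) : p t ≤ pYZ t.2 := pmass_le_pmass_comp T Prod.snd t
  have hpZ (t) : p t ≤ pZ t.2.2 := pmass_le_pmass_comp T (fun t => t.2.2) t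
  have hgibbs : ∑ t, p t * Real.log (pXZ (t.1, t.2.2) * pYZ t.2 / pZ t.2.2)
      ≤ ∑ t, p t * Real.log (p t) := by
    refine gibbs_inequality (fun t _ => hp t) (fun t _ => ?_) (fun t _ h => ?_) (le_of_eq ?_)
    · exact div_nonneg (mul_nonneg (pmass_nonneg _ _) (pmass_nonneg _ _)) (pmass_nonneg _ _)
    · grind [div_eq_zero_iff, mul_eq_zero]
    · rw [sum_pmass_mul_pmass_div_pmass hX hY Z]
      simpa using sum_pmass_comp_mul hT (fun t => t.2.2) (fun _ => 1)
  simp only [mul_log_mul_div (hp _) (hpXZ _) (hpYZ _) (hpZ _), Finset.sum_sub_distrib,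
    Finset.sum_add_distrib] at hgibbs
  have hXZ_entropy : entropyRV μ (fun ω => (X ω, Z ω)) = _ :=
    entropyRV_comp hT fun t => (t.1, t.2.2)
  have hYZ_entropy : entropyRV μ (fun ω => (Y ω, Z ω)) = _ := entropyRV_comp hT Prod.snd
  have hZ_entropy : entropyRV μ Z = _ := entropyRV_comp hT fun t => t.2.2
  have hT_entropy : entropyRV μ T = -∑ t, p t * Real.log (p t) := entropyRV_comp hT id
  rw [condMutualInfoRV, hXZ_entropy, hYZ_entropy, hZ_entropy, hT_entropy]
  linarith

variable [IsProbabilityMeasure μ]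

lemma entropyRV_le_of_factorsThrough {ξ : Type*} [Fintype ξ] {T : Ω → ξ} (hX : Measurable X)
    (h : T.FactorsThrough X) : entropyRV μ T ≤ entropyRV μ X := by
  have := μ.nonempty_of_neZero
  obtain ⟨f, rfl⟩ := exists_eq_comp_of_factorsThrough h
  exact entropyRV_comp_le hX f

lemma entropyRV_congr (hX : Measurable X) (hYX : Y.FactorsThrough X) (hXY : X.FactorsThrough Y) :
    entropyRV μ X = entropyRV μ Y :=
  (entropyRV_le_of_factorsThrough (measurable_of_factorsThrough hX hYX) hXY).antisymm
    (entropyRV_le_of_factorsThrough hX hYX)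

lemma entropyRV_swap (hX : Measurable X) (hY : Measurable Y) :
    entropyRV μ (fun ω => (X ω, Y ω)) = entropyRV μ (fun ω => (Y ω, X ω)) :=
  entropyRV_congr (by fun_prop) (fun _ _ => by grind) (fun _ _ => by grind)

lemma entropyRV_left_comm (hX : Measurable X) (hY : Measurable Y) (hZ : Measurable Z) :
    entropyRV μ (fun ω => (X ω, Y ω, Z ω)) = entropyRV μ (fun ω => (Y ω, X ω, Z ω)) :=
  entropyRV_congr (by fun_prop) (fun _ _ => by grind) (fun _ _ => by grind)

lemma condEntropyRV_congr (hX : Measurable X) (hY : Measurable Y) (hZY : Z.FactorsThrough Y)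
    (hYZ : Y.FactorsThrough Z) : condEntropyRV μ X Y = condEntropyRV μ X Z := by
  rw [condEntropyRV, condEntropyRV, entropyRV_congr hY hZY hYZ,
    entropyRV_congr (hX.prodMk hY) (Y := fun ω => (X ω, Z ω))]
  · grind [FactorsThrough]
  · grind [FactorsThrough]

lemma condMutualInfoRV_eq_condEntropyRV_sub (hX : Measurable X) (hY : Measurable Y)
    (hZ : Measurable Z) : condMutualInfoRV μ X Y Z
      = condEntropyRV μ Y Z - condEntropyRV μ Y (fun ω => (X ω, Z ω)) := by
  rw [condMutualInfoRV, condEntropyRV, condEntropyRV, entropyRV_left_comm hX hY hZ]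
  ring

lemma condMutualInfoRV_of_factorsThrough (hX : Measurable X) (hY : Measurable Y)
    (h : Z.FactorsThrough X) :
    condMutualInfoRV μ X Y Z = condEntropyRV μ Y Z - condEntropyRV μ Y X := by
  rw [condMutualInfoRV_eq_condEntropyRV_sub hX hY (measurable_of_factorsThrough hX h),
    condEntropyRV_congr hY hX (Z := fun ω => (X ω, Z ω))]
  · grind [FactorsThrough]
  · grind [FactorsThrough]

lemma condEntropyRV_sub_condEntropyRV (hX : Measurable X) (hY : Measurable Y)
    (hZ : Measurable Z) : condEntropyRV μ X Z - condEntropyRV μ Y Z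
      = condEntropyRV μ X (fun ω => (Y ω, Z ω)) - condEntropyRV μ Y (fun ω => (X ω, Z ω)) := by
  simp only [condEntropyRV, entropyRV_left_comm hX hY hZ]
  ring

lemma condEntropyRV_le_of_factorsThrough (hX : Measurable X) (hY : Measurable Y)
    (h : Z.FactorsThrough Y) : condEntropyRV μ X Y ≤ condEntropyRV μ X Z := by
  have hZ := measurable_of_factorsThrough hY h
  have hYZ : condEntropyRV μ X Y = condEntropyRV μ X (fun ω => (Y ω, Z ω)) :=
    condEntropyRV_congr hX hY (by grind [FactorsThrough]) (by grind [FactorsThrough])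
  have hnonneg := condMutualInfoRV_nonneg (μ := μ) hY hX hZ
  rw [condMutualInfoRV_eq_condEntropyRV_sub hY hX hZ] at hnonneg
  linarith

lemma condEntropyRV_le_entropyRV (hX : Measurable X) (hY : Measurable Y) :
    condEntropyRV μ X Y ≤ entropyRV μ X := by
  have hunit : entropyRV μ (fun _ => ()) = 0 := by simp [entropyRV, pmass]
  have hX_unit : entropyRV μ (fun ω => (X ω, ())) = entropyRV μ X :=
    (entropyRV_congr hX (by grind [FactorsThrough]) (by grind [FactorsThrough])).symm
  calc condEntropyRV μ X Y ≤ condEntropyRV μ X (fun _ => ()) :=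
        condEntropyRV_le_of_factorsThrough hX hY (fun _ _ _ => rfl)
    _ = entropyRV μ X := by rw [condEntropyRV, hunit, hX_unit, sub_zero]

lemma condEntropyRV_le_entropyRV_of_factorsThrough {ξ : Type*} [Fintype ξ] {T : Ω → ξ}
    (hY : Measurable Y) (hZ : Measurable Z) (h : T.FactorsThrough (fun ω => (Y ω, Z ω))) :
    condEntropyRV μ T Z ≤ entropyRV μ Y :=
  calc condEntropyRV μ T Z ≤ condEntropyRV μ Y Z :=
        sub_le_sub_right (entropyRV_le_of_factorsThrough (by fun_prop)
          (by grind [FactorsThrough])) _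
    _ ≤ entropyRV μ Y := condEntropyRV_le_entropyRV hY hZ

end Entropy

section Independence

variable {Ω : Type*} [MeasurableSpace Ω] {μ : Measure Ω} {α β γ : Type*}
  [MeasurableSpace α] [MeasurableSingletonClass α] [MeasurableSpace β] [MeasurableSingletonClass β]
  [MeasurableSpace γ] [MeasurableSingletonClass γ]
  {X : Ω → α} {Y : Ω → β} {Z : Ω → γ}

lemma indepRV_iff_indepFun [IsFiniteMeasure μ] [Countable α] [Countable β]
    (hX : Measurable X) (hY : Measurable Y) : IndepRV μ X Y ↔ IndepFun X Y μ := by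
  rw [indepFun_iff_map_prod_eq_prod_map_map hX.aemeasurable hY.aemeasurable,
    Measure.ext_iff_singleton, Prod.forall]
  refine forall₂_congr fun x y => ?_
  rw [← Set.singleton_prod_singleton, Measure.prod_prod, Set.singleton_prod_singleton,
    Measure.map_apply (hX.prodMk hY) (measurableSet_singleton _),
    Measure.map_apply hX (measurableSet_singleton x),
    Measure.map_apply hY (measurableSet_singleton y), pmass, pmass, pmass, ← ENNReal.toReal_mul,
    ENNReal.toReal_eq_toReal_iff' (by finiteness) (by finiteness)]

lemma iIndepFun_iff_pmass_eq_prod [IsProbabilityMeasure μ] [Countable α] {ι : Type*} [Fintype ι]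
    {S : Ω → ι → α} (hS : Measurable S) : iIndepFun (fun i ω => S ω i) μ
      ↔ ∀ v, pmass μ S v = ∏ i, pmass μ (fun ω => S ω i) (v i) := by
  have hSi (i) : Measurable fun ω => S ω i := by fun_prop
  rw [iIndepFun_iff_map_fun_eq_pi_map fun i => (hSi i).aemeasurable, Measure.ext_iff_singleton]
  refine forall_congr' fun v => ?_
  simp_rw [Measure.pi_singleton, Measure.map_apply hS (measurableSet_singleton v),
    Measure.map_apply (hSi _) (measurableSet_singleton _), pmass, ← ENNReal.toReal_prod]
  rw [ENNReal.toReal_eq_toReal_iff' (by finiteness)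
    (ENNReal.prod_ne_top fun i _ => by finiteness)]

lemma indepFun_prodMk_of_indepFun_of_indepFun_prodMk [IsProbabilityMeasure μ] [Countable α]
    [Countable β] [Countable γ] (hX : Measurable X) (hY : Measurable Y) (hZ : Measurable Z)
    (hXY : IndepFun X Y μ) (hZXY : IndepFun Z (fun ω => (X ω, Y ω)) μ) :
    IndepFun X (fun ω => (Z ω, Y ω)) μ := by
  rw [← indepRV_iff_indepFun hX hY] at hXY
  have hZY := (indepRV_iff_indepFun hZ hY).2 (hZXY.comp measurable_id measurable_snd)
  rw [← indepRV_iff_indepFun hZ (by fun_prop)] at hZXY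
  refine (indepRV_iff_indepFun hX (by fun_prop)).1 fun x ⟨z, y⟩ => ?_
  have hreorder : pmass μ (fun ω => (X ω, Z ω, Y ω)) (x, z, y)
      = pmass μ (fun ω => (Z ω, X ω, Y ω)) (z, x, y) := by
    unfold pmass
    congr 2
    ext ω
    simp only [Set.mem_preimage, Set.mem_singleton_iff, Prod.mk.injEq]
    tauto
  rw [hreorder, hZXY, hXY, hZY]
  ring

lemma indepFun_block_prodMk_compl [IsProbabilityMeasure μ] [Countable α] [Countable β] {ι : Type*}
    [Fintype ι] [DecidableEq ι] {S : Ω → ι → α} {K : Ω → β} (hS : Measurable S)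
    (hK : Measurable K) (hSS : iIndepFun (fun i ω => S ω i) μ) (hKS : IndepFun K S μ)
    (s : Finset ι) :
    IndepFun (fun ω (j : s) => S ω j) (fun ω => (K ω, fun j : ↥sᶜ => S ω j)) μ := by
  have hblocks : IndepFun (fun ω (j : s) => S ω j) (fun ω (j : ↥sᶜ) => S ω j) μ :=
    hSS.indepFun_finset s sᶜ disjoint_compl_right fun i => by fun_prop
  have hsplit : Measurable fun v : ι → α => (fun j : s => v j, fun j : ↥sᶜ => v j) := by fun_prop
  exact indepFun_prodMk_of_indepFun_of_indepFun_prodMk (by fun_prop) (by fun_prop) hK hblocks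
    (hKS.comp measurable_id hsplit)

lemma HasIIDLaw.pmass_apply [IsFiniteMeasure μ] [Fintype α] {n : ℕ} {S : Ω → Fin n → α}
    {p : α → ℝ} (h : HasIIDLaw μ S p) (hS : Measurable S) (hp : ∑ a, p a = 1) (i : Fin n) (a : α) :
    pmass μ (fun ω => S ω i) a = p a := by
  classical
  have hcylinder : ({v | v i = a} : Finset (Fin n → α))
      = Fintype.piFinset (update (fun _ => Finset.univ) i ({a} : Finset α)) := by
    ext v
    simp only [Finset.mem_filter_univ, Fintype.mem_piFinset]
    refine ⟨fun hv j => ?_, fun hv => by simpa using hv i⟩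
    rcases eq_or_ne j i with rfl | hj
    · simpa using hv
    · simp [hj]
  rw [pmass_comp hS (fun v => v i) a, hcylinder, Finset.sum_congr rfl fun v _ => h v,
    ← Finset.prod_univ_sum, Fintype.prod_eq_single i fun j hj => by simp [hj, hp]]
  simp

lemma HasIIDLaw.iIndepFun [IsProbabilityMeasure μ] [Fintype α] {n : ℕ} {S : Ω → Fin n → α}
    {p : α → ℝ} (h : HasIIDLaw μ S p) (hS : Measurable S) (hp : ∑ a, p a = 1) :
    iIndepFun (fun i ω => S ω i) μ :=
  (iIndepFun_iff_pmass_eq_prod hS).2 fun v => by simp only [h v, h.pmass_apply hS hp]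

variable [Fintype α] [Fintype β] [Fintype γ] [IsProbabilityMeasure μ]

lemma entropyRV_prodMk_of_indepFun (hX : Measurable X) (hY : Measurable Y)
    (h : IndepFun X Y μ) :
    entropyRV μ (fun ω => (X ω, Y ω)) = entropyRV μ X + entropyRV μ Y := by
  have hjoint (t : α × β) := (indepRV_iff_indepFun hX hY).2 h t.1 t.2
  simp only [entropyRV, hjoint, Real.negMulLog_mul, Finset.sum_add_distrib, Fintype.sum_prod_type,
    ← Finset.sum_mul, ← Finset.mul_sum, sum_pmass hX, sum_pmass hY, one_mul]

lemma entropyRV_pi_of_iIndepFun {ι : Type*} [Fintype ι] [DecidableEq ι] {S : Ω → ι → α}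
    (hS : Measurable S) (h : iIndepFun (fun i ω => S ω i) μ) :
    entropyRV μ S = ∑ i, entropyRV μ (fun ω => S ω i) := by
  have hlog (v) : pmass μ S v * Real.log (pmass μ S v)
      = ∑ i, pmass μ S v * Real.log (pmass μ (fun ω => S ω i) (v i)) := by
    rcases (pmass_nonneg (μ := μ) S v).eq_or_lt with hv | hv
    · simp [← hv]
    · rw [← Finset.mul_sum, ← Real.log_prod, ← (iIndepFun_iff_pmass_eq_prod hS).1 h]
      exact fun i _ => (hv.trans_le (pmass_le_pmass_comp S (fun v => v i) v)).ne'
  calc entropyRV μ S = -∑ v, pmass μ S v * Real.log (pmass μ S v) := entropyRV_comp hS id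
    _ = ∑ i, -∑ v, pmass μ S v * Real.log (pmass μ (fun ω => S ω i) (v i)) := by
      rw [Finset.sum_congr rfl fun v _ => hlog v, Finset.sum_comm, Finset.sum_neg_distrib]
    _ = ∑ i, entropyRV μ (fun ω => S ω i) :=
      Finset.sum_congr rfl fun i _ => (entropyRV_comp hS fun v => v i).symm

lemma condEntropyRV_eq_of_indepFun {δ : Type*} [Finite δ] [MeasurableSpace δ]
    [MeasurableSingletonClass δ] {T : Ω → δ} (hX : Measurable X) (hY : Measurable Y)
    (hT : Measurable T) (h : IndepFun (fun ω => (X ω, Y ω)) T μ) (hYZ : Y.FactorsThrough Z)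
    (hZ : Z.FactorsThrough (fun ω => (Y ω, T ω))) :
    condEntropyRV μ X Z = condEntropyRV μ X Y := by
  have := Fintype.ofFinite δ
  have hYT : IndepFun Y T μ := h.comp measurable_snd measurable_id
  have hZmeas : Measurable Z := measurable_of_factorsThrough (by fun_prop) hZ
  refine (condEntropyRV_le_of_factorsThrough hX hZmeas hYZ).antisymm ?_
  calc condEntropyRV μ X Y
      = condEntropyRV μ X (fun ω => (Y ω, T ω)) := by
        have hassoc : entropyRV μ (fun ω => ((X ω, Y ω), T ω))
            = entropyRV μ (fun ω => (X ω, Y ω, T ω)) :=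
          entropyRV_congr (by fun_prop) (by grind [FactorsThrough]) (by grind [FactorsThrough])
        rw [condEntropyRV, condEntropyRV, ← hassoc, entropyRV_prodMk_of_indepFun (by fun_prop) hT h,
          entropyRV_prodMk_of_indepFun hY hT hYT]
        ring
    _ ≤ condEntropyRV μ X Z := condEntropyRV_le_of_factorsThrough hX (by fun_prop) hZ

lemma condEntropyRV_eq_of_block {ι σ κ : Type*} [Fintype ι] [DecidableEq ι]
    [Finite σ] [MeasurableSpace σ] [MeasurableSingletonClass σ]
    [Finite κ] [MeasurableSpace κ] [MeasurableSingletonClass κ] {S : Ω → ι → σ} {K : Ω → κ}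
    (hS : Measurable S) (hK : Measurable K) (hSS : iIndepFun (fun i ω => S ω i) μ)
    (hKS : IndepFun K S μ) (s : Finset ι)
    (hX : X.FactorsThrough (fun ω (j : s) => S ω j))
    (hY : Y.FactorsThrough (fun ω (j : s) => S ω j)) (hYZ : Y.FactorsThrough Z)
    (hZ : Z.FactorsThrough (fun ω => (Y ω, K ω, fun j : ↥sᶜ => S ω j))) :
    condEntropyRV μ X Z = condEntropyRV μ X Y := by
  have := μ.nonempty_of_neZero
  obtain ⟨f, rfl⟩ := exists_eq_comp_of_factorsThrough hX
  obtain ⟨g, rfl⟩ := exists_eq_comp_of_factorsThrough hY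
  have hblock : Measurable fun ω (j : s) => S ω j := by fun_prop
  have hindep := (indepFun_block_prodMk_compl hS hK hSS hKS s).comp
    (measurable_of_finite fun v => (f v, g v)) measurable_id
  exact condEntropyRV_eq_of_indepFun ((measurable_of_finite f).comp hblock)
    ((measurable_of_finite g).comp hblock) (by fun_prop) hindep hYZ hZ

lemma entropyRV_sub_condEntropyRV_prodMk_le (hX : Measurable X) (hY : Measurable Y)
    (h : IndepFun X Y μ) (hZ : Z.FactorsThrough (fun ω => (X ω, Y ω))) :
    entropyRV μ X - condEntropyRV μ X (fun ω => (Z ω, Y ω)) ≤ entropyRV μ Z := by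
  have hZmeas : Measurable Z := measurable_of_factorsThrough (hX.prodMk hY) hZ
  have hjoint : entropyRV μ (fun ω => (X ω, Z ω, Y ω)) = entropyRV μ X + entropyRV μ Y := by
    rw [← entropyRV_prodMk_of_indepFun hX hY h]
    exact entropyRV_congr (by fun_prop) (by grind [FactorsThrough]) (by grind [FactorsThrough])
  have hZY := condEntropyRV_le_entropyRV (μ := μ) hZmeas hY
  rw [condEntropyRV] at hZY ⊢
  linarith

end Independence

section CsiszarSum

variable {Ω : Type*} {n : ℕ} {α β γ : Type*}

/-- The block `X^{i-1}` of the letters of `X` strictly before position `i`. -/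
def past (X : Ω → Fin n → α) (i : Fin n) (ω : Ω) : {j : Fin n // j.1 < i} → α :=
  fun j => X ω j

/-- The block `X_{i+1}^n` of the letters of `X` strictly after position `i`. -/
def future (X : Ω → Fin n → α) (i : Fin n) (ω : Ω) : {j : Fin n // i < j} → α :=
  fun j => X ω j

/-- The conditioning `(C, A_{i+1}^n, B^{i-1})` of the Csiszár sum identity. With `C = W`, `A = Y`
and `B = Z` it is the auxiliary variable `V_i`. -/
def interleave (C : Ω → γ) (A : Ω → Fin n → α) (B : Ω → Fin n → β) (i : Fin n) (ω : Ω) :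
    γ × ({j : Fin n // i < j} → α) × ({j : Fin n // j.1 < i} → β) :=
  (C ω, future A i ω, past B i ω)

variable [MeasurableSpace Ω] [MeasurableSpace α] [MeasurableSpace β] [MeasurableSpace γ]

@[fun_prop]
lemma measurable_past {X : Ω → Fin n → α} (hX : Measurable X) (i : Fin n) :
    Measurable (past X i) :=
  measurable_pi_lambda _ fun j => (measurable_pi_apply j.1).comp hX

@[fun_prop]
lemma measurable_future {X : Ω → Fin n → α} (hX : Measurable X) (i : Fin n) :
    Measurable (future X i) :=
  measurable_pi_lambda _ fun j => (measurable_pi_apply j.1).comp hX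

@[fun_prop]
lemma measurable_interleave {C : Ω → γ} {A : Ω → Fin n → α} {B : Ω → Fin n → β}
    (hC : Measurable C) (hA : Measurable A) (hB : Measurable B) (i : Fin n) :
    Measurable (interleave C A B i) :=
  hC.prodMk ((measurable_future hA i).prodMk (measurable_past hB i))

variable {μ : Measure Ω} [IsProbabilityMeasure μ] [Fintype α] [MeasurableSingletonClass α]
  [Fintype β] [MeasurableSingletonClass β] [Fintype γ] [MeasurableSingletonClass γ]

-- Telescoping: revealing `B_i` resp. `A_i` next to the conditioning turns it into the hybrid tuple
-- `(C, A_k^n, B^{k-1})` for `k = i + 1` resp. `k = i`.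
lemma csiszar_sum_condEntropyRV {C : Ω → γ} {A : Ω → Fin n → α} {B : Ω → Fin n → β}
    (hC : Measurable C) (hA : Measurable A) (hB : Measurable B) :
    ∑ i, (condEntropyRV μ (fun ω => B ω i) (interleave C A B i)
        - condEntropyRV μ (fun ω => A ω i) (interleave C A B i))
      = condEntropyRV μ B C - condEntropyRV μ A C := by
  let hybrid (k : ℕ) : ℝ := entropyRV μ fun ω =>
    (C ω, (fun j : {j : Fin n // k ≤ j.1} => A ω j), (fun j : {j : Fin n // j.1 < k} => B ω j))
  have hybrid_step (i : Fin n) :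
      entropyRV μ (fun ω => (A ω i, interleave C A B i ω)) = hybrid i ∧
      entropyRV μ (fun ω => (B ω i, interleave C A B i ω)) = hybrid (i + 1) := by
    refine ⟨entropyRV_congr ?_ ?_ ?_, entropyRV_congr ?_ ?_ ?_⟩
    any_goals fun_prop
    all_goals
      intro ω ω' h
      simp only [interleave, past, future, Prod.mk.injEq, funext_iff, Subtype.forall] at h ⊢
      grind
  have hybrid_ends : entropyRV μ (fun ω => (A ω, C ω)) = hybrid 0 ∧
      entropyRV μ (fun ω => (B ω, C ω)) = hybrid n := by
    refine ⟨entropyRV_congr ?_ ?_ ?_, entropyRV_congr ?_ ?_ ?_⟩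
    any_goals fun_prop
    all_goals
      intro ω ω' h
      simp only [Prod.mk.injEq, funext_iff, Subtype.forall] at h ⊢
      grind
  calc _ = ∑ i : Fin n, (hybrid (i + 1) - hybrid i) := by
        simp only [condEntropyRV, hybrid_step, sub_sub_sub_cancel_right]
    _ = hybrid n - hybrid 0 := by
        rw [Fin.sum_univ_eq_sum_range fun k => hybrid (k + 1) - hybrid k, Finset.sum_range_sub]
    _ = _ := by rw [condEntropyRV, condEntropyRV, hybrid_ends.1, hybrid_ends.2]; ring

end CsiszarSum

section Converse

variable {Ω : Type*} {n : ℕ} {𝒳t 𝒳 𝒴 𝒵 𝒲 𝒦 : Type*}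
  {Xt : Ω → Fin n → 𝒳t} {X : Ω → Fin n → 𝒳} {Y : Ω → Fin n → 𝒴} {Z : Ω → Fin n → 𝒵}
  {W : Ω → 𝒲} {K : Ω → 𝒦}

/-- The auxiliary variable `U_i = (W, Y_{i+1}^n, Z^{i-1}, X^{i-1}, K)` of the bound. -/
def auxU (W : Ω → 𝒲) (K : Ω → 𝒦) (X : Ω → Fin n → 𝒳) (Y : Ω → Fin n → 𝒴) (Z : Ω → Fin n → 𝒵)
    (i : Fin n) (ω : Ω) : 𝒲 × ({j : Fin n // i < j} → 𝒴) × ({j : Fin n // j.1 < i} → 𝒵) ×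
      ({j : Fin n // j.1 < i} → 𝒳) × 𝒦 :=
  (W ω, future Y i ω, past Z i ω, past X i ω, K ω)

variable [MeasurableSpace Ω] {μ : Measure Ω}
  [MeasurableSpace 𝒳t] [MeasurableSpace 𝒳] [MeasurableSpace 𝒴] [MeasurableSpace 𝒵]
  [MeasurableSpace 𝒦]

/-- The converse setup: letters `(X̃_i, X_i, Y_i, Z_i)` independent across positions, a key `K`
independent of all letters, and a message `W` determined by `X̃^n` and `K`. -/
structure ConverseSetup (μ : Measure Ω) (Xt : Ω → Fin n → 𝒳t) (X : Ω → Fin n → 𝒳)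
    (Y : Ω → Fin n → 𝒴) (Z : Ω → Fin n → 𝒵) (K : Ω → 𝒦) (W : Ω → 𝒲) : Prop where
  measurable_letters : Measurable fun ω j => (Xt ω j, X ω j, Y ω j, Z ω j)
  measurable_key : Measurable K
  iIndepFun_letters : iIndepFun (fun j ω => (Xt ω j, X ω j, Y ω j, Z ω j)) μ
  indepFun_key : IndepFun K (fun ω j => (Xt ω j, X ω j, Y ω j, Z ω j)) μ
  message_factorsThrough : W.FactorsThrough (fun ω => (Xt ω, K ω))

namespace ConverseSetup

lemma measurable_Xt (h : ConverseSetup μ Xt X Y Z K W) : Measurable Xt :=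
  measurable_pi_lambda _ fun j => ((measurable_pi_apply j).comp h.measurable_letters).fst

lemma measurable_X (h : ConverseSetup μ Xt X Y Z K W) : Measurable X :=
  measurable_pi_lambda _ fun j => ((measurable_pi_apply j).comp h.measurable_letters).snd.fst

lemma measurable_Y (h : ConverseSetup μ Xt X Y Z K W) : Measurable Y :=
  measurable_pi_lambda _ fun j => ((measurable_pi_apply j).comp h.measurable_letters).snd.snd.fst

lemma measurable_Z (h : ConverseSetup μ Xt X Y Z K W) : Measurable Z :=
  measurable_pi_lambda _ fun j => ((measurable_pi_apply j).comp h.measurable_letters).snd.snd.snd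

section Measurability

variable [Finite 𝒳t] [MeasurableSingletonClass 𝒳t] [Finite 𝒦] [MeasurableSingletonClass 𝒦]
  [MeasurableSpace 𝒲]

lemma measurable_W (h : ConverseSetup μ Xt X Y Z K W) : Measurable W :=
  measurable_of_factorsThrough (h.measurable_Xt.prodMk h.measurable_key) h.message_factorsThrough

lemma measurable_auxU (h : ConverseSetup μ Xt X Y Z K W) (i : Fin n) :
    Measurable (auxU W K X Y Z i) :=
  h.measurable_W.prodMk <| (measurable_future h.measurable_Y i).prodMk <|
    (measurable_past h.measurable_Z i).prodMk <|
    (measurable_past h.measurable_X i).prodMk h.measurable_key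

lemma measurable_interleave_WK (h : ConverseSetup μ Xt X Y Z K W) (i : Fin n) :
    Measurable (interleave (fun ω => (W ω, K ω)) Y Xt i) :=
  measurable_interleave (h.measurable_W.prodMk h.measurable_key) h.measurable_Y h.measurable_Xt i

end Measurability

variable [IsProbabilityMeasure μ]

lemma entropyRV_Xt [Fintype 𝒳t] [MeasurableSingletonClass 𝒳t]
    (h : ConverseSetup μ Xt X Y Z K W) :
    entropyRV μ Xt = ∑ i, entropyRV μ (fun ω => Xt ω i) :=
  entropyRV_pi_of_iIndepFun h.measurable_Xt
    (h.iIndepFun_letters.comp (fun _ s => s.1) fun _ => by fun_prop)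

lemma entropyRV_Z [Fintype 𝒵] [MeasurableSingletonClass 𝒵]
    (h : ConverseSetup μ Xt X Y Z K W) :
    entropyRV μ Z = ∑ i, entropyRV μ (fun ω => Z ω i) :=
  entropyRV_pi_of_iIndepFun h.measurable_Z
    (h.iIndepFun_letters.comp (fun _ s => s.2.2.2) fun _ => by fun_prop)

lemma le_condMutualInfoRV_add_entropyRV_key [Fintype 𝒳t] [MeasurableSingletonClass 𝒳t]
    [Fintype 𝒵] [MeasurableSingletonClass 𝒵] [Fintype 𝒦] [MeasurableSingletonClass 𝒦]
    [Fintype 𝒲] [MeasurableSpace 𝒲] [MeasurableSingletonClass 𝒲]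
    (h : ConverseSetup μ Xt X Y Z K W) :
    entropyRV μ Xt - condEntropyRV μ Xt (fun ω => (W ω, K ω))
        + condEntropyRV μ Z W - entropyRV μ Z
      ≤ condMutualInfoRV μ Xt W Z + entropyRV μ K := by
  have hXt := h.measurable_Xt
  have hZ := h.measurable_Z
  have hW := h.measurable_W
  have hK := h.measurable_key
  have hXt_indep : IndepFun Xt K μ :=
    (h.indepFun_key.comp measurable_id (by fun_prop :
      Measurable fun (s : Fin n → 𝒳t × 𝒳 × 𝒴 × 𝒵) j => (s j).1)).symm
  have hXt_W : entropyRV μ Xt - condEntropyRV μ Xt (fun ω => (W ω, K ω)) ≤ entropyRV μ W :=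
    entropyRV_sub_condEntropyRV_prodMk_le hXt hK hXt_indep h.message_factorsThrough
  have hW_XtZ : condEntropyRV μ W (fun ω => (Xt ω, Z ω)) ≤ entropyRV μ K :=
    condEntropyRV_le_entropyRV_of_factorsThrough hK (hXt.prodMk hZ) fun ω ω' hω =>
      h.message_factorsThrough (by grind)
  have hZW : condEntropyRV μ Z W - entropyRV μ Z = condEntropyRV μ W Z - entropyRV μ W := by
    rw [condEntropyRV, condEntropyRV, entropyRV_swap hZ hW]
    ring
  rw [condMutualInfoRV_eq_condEntropyRV_sub hXt hW hZ]
  linarith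

variable [MeasurableSingletonClass 𝒳t] [MeasurableSingletonClass 𝒳] [MeasurableSingletonClass 𝒴]
  [MeasurableSingletonClass 𝒵] [MeasurableSingletonClass 𝒦]

lemma condEntropyRV_letter_prodMk [Fintype 𝒳t] [Finite 𝒳] [Finite 𝒴] [Finite 𝒵] [Finite 𝒦]
    {α β : Type*} [Fintype α] [MeasurableSpace α] [MeasurableSingletonClass α]
    [Fintype β] [MeasurableSpace β] [MeasurableSingletonClass β]
    {F : Ω → α} {T : Ω → β} (h : ConverseSetup μ Xt X Y Z K W) (i : Fin n)
    (hF : F.FactorsThrough fun ω => (Xt ω i, X ω i, Y ω i, Z ω i))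
    (hT : T.FactorsThrough fun ω =>
      (Xt ω, K ω, fun j : {j // j ≠ i} => (X ω j, Y ω j, Z ω j))) :
    condEntropyRV μ F (fun ω => (Xt ω i, T ω)) = condEntropyRV μ F (fun ω => Xt ω i) := by
  refine condEntropyRV_eq_of_block h.measurable_letters h.measurable_key h.iIndepFun_letters
    h.indepFun_key {i} (fun ω ω' hω => hF ?_) (fun ω ω' hω => ?_) (fun ω ω' hω => ?_)
    (fun ω ω' hω => Prod.ext ?_ (hT ?_))
  all_goals
    simp only [Prod.mk.injEq, funext_iff, Subtype.forall, Finset.mem_compl,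
      Finset.mem_singleton] at hω ⊢
    grind

lemma condEntropyRV_past_prodMk [Fintype 𝒳t] [Fintype 𝒳] [Finite 𝒴] [Fintype 𝒵] [Finite 𝒦]
    {β : Type*} [Fintype β] [MeasurableSpace β] [MeasurableSingletonClass β]
    {T : Ω → β} (h : ConverseSetup μ Xt X Y Z K W) (i : Fin n)
    (hT : T.FactorsThrough fun ω =>
      (Xt ω, K ω, fun j : {j // i ≤ j} => (X ω j, Y ω j, Z ω j)))
    (hpast : (past Xt i).FactorsThrough T) :
    condEntropyRV μ (fun ω => (past X i ω, past Z i ω)) T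
      = condEntropyRV μ (fun ω => (past X i ω, past Z i ω)) (past Xt i) := by
  refine condEntropyRV_eq_of_block h.measurable_letters h.measurable_key h.iIndepFun_letters
    h.indepFun_key {j | j < i} (fun ω ω' hω => ?_) (fun ω ω' hω => ?_) hpast
    (fun ω ω' hω => hT ?_)
  all_goals
    simp only [past, Prod.mk.injEq, funext_iff, Subtype.forall, Finset.mem_compl,
      Finset.mem_filter_univ] at hω ⊢
    grind

variable [Fintype 𝒴] [Fintype 𝒦] [Fintype 𝒲] [MeasurableSpace 𝒲] [MeasurableSingletonClass 𝒲]

lemma condEntropyRV_letter_interleave [Fintype 𝒳t] [Finite 𝒳] [Finite 𝒵] {α : Type*}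
    [Fintype α] [MeasurableSpace α] [MeasurableSingletonClass α] {F : Ω → α}
    (h : ConverseSetup μ Xt X Y Z K W) (i : Fin n)
    (hF : F.FactorsThrough fun ω => (Xt ω i, X ω i, Y ω i, Z ω i)) :
    condEntropyRV μ F (fun ω => (Xt ω i, interleave (fun ω => (W ω, K ω)) Y Xt i ω))
      = condEntropyRV μ F (fun ω => Xt ω i) := by
  refine h.condEntropyRV_letter_prodMk i hF fun ω ω' hω => ?_
  have hW := @h.message_factorsThrough ω ω'
  simp only [interleave, past, future, Prod.mk.injEq, funext_iff, Subtype.forall] at hω hW ⊢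
  grind

lemma condMutualInfoRV_auxU_interleave [Finite 𝒳t] [Fintype 𝒳] [Fintype 𝒵] {α : Type*}
    [Fintype α] [MeasurableSpace α] [MeasurableSingletonClass α] {F : Ω → α}
    (h : ConverseSetup μ Xt X Y Z K W) (hF : Measurable F) (i : Fin n) :
    condMutualInfoRV μ (auxU W K X Y Z i) F (interleave W Y Z i)
      = condEntropyRV μ F (interleave W Y Z i) - condEntropyRV μ F (auxU W K X Y Z i) :=
  condMutualInfoRV_of_factorsThrough (h.measurable_auxU i) hF
    fun ω ω' hω => by simp only [auxU, interleave, Prod.mk.injEq] at hω ⊢; grind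

variable [Fintype 𝒳t] [Fintype 𝒳] [Fintype 𝒵]

lemma condEntropyRV_letter_auxU {α : Type*} [Fintype α] [MeasurableSpace α]
    [MeasurableSingletonClass α] {F : Ω → α} (h : ConverseSetup μ Xt X Y Z K W) (i : Fin n)
    (hF : F.FactorsThrough fun ω => (Xt ω i, X ω i, Y ω i, Z ω i)) :
    condEntropyRV μ F (fun ω => (Xt ω i, auxU W K X Y Z i ω))
      = condEntropyRV μ F (fun ω => Xt ω i) := by
  refine h.condEntropyRV_letter_prodMk i hF fun ω ω' hω => ?_
  have hW := @h.message_factorsThrough ω ω'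
  simp only [auxU, past, future, Prod.mk.injEq, funext_iff, Subtype.forall] at hω hW ⊢
  grind

lemma condEntropyRV_Xt_pasts_prodMk (h : ConverseSetup μ Xt X Y Z K W) (i : Fin n) :
    condEntropyRV μ (fun ω => Xt ω i) (fun ω => ((past X i ω, past Z i ω), Y ω i,
        interleave (fun ω => (W ω, K ω)) Y Xt i ω))
      = condEntropyRV μ (fun ω => Xt ω i)
          (fun ω => (Y ω i, interleave (fun ω => (W ω, K ω)) Y Xt i ω)) := by
  have := h.measurable_Xt
  have := h.measurable_X
  have := h.measurable_Y
  have := h.measurable_Z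
  have := h.measurable_interleave_WK i
  have hswap := condEntropyRV_sub_condEntropyRV (μ := μ) (X := fun ω => Xt ω i)
    (Y := fun ω => (past X i ω, past Z i ω))
    (Z := fun ω => (Y ω i, interleave (fun ω => (W ω, K ω)) Y Xt i ω))
    (by fun_prop) (by fun_prop) (by fun_prop)
  rw [h.condEntropyRV_past_prodMk i
      (T := fun ω => (Y ω i, interleave (fun ω => (W ω, K ω)) Y Xt i ω)),
    h.condEntropyRV_past_prodMk i
      (T := fun ω => (Xt ω i, Y ω i, interleave (fun ω => (W ω, K ω)) Y Xt i ω))] at hswap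
  · linarith
  all_goals
    intro ω ω' hω
    have hW := @h.message_factorsThrough ω ω'
    simp only [interleave, past, future, Prod.mk.injEq, funext_iff, Subtype.forall] at hω hW ⊢
    grind

-- Given `X̃_i`, neither conditioning affects `Y_i`, so exchanging `Y_i` with `X̃_i` leaves only
-- `H(X̃_i | Y_i, ·)` to compare.
lemma condEntropyRV_Y_sub_condEntropyRV_Xt_le (h : ConverseSetup μ Xt X Y Z K W) (i : Fin n) :
    condEntropyRV μ (fun ω => Y ω i) (auxU W K X Y Z i)
        - condEntropyRV μ (fun ω => Xt ω i) (auxU W K X Y Z i)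
      ≤ condEntropyRV μ (fun ω => Y ω i) (interleave (fun ω => (W ω, K ω)) Y Xt i)
        - condEntropyRV μ (fun ω => Xt ω i) (interleave (fun ω => (W ω, K ω)) Y Xt i) := by
  have := h.measurable_X
  have := h.measurable_Z
  have hXt : Measurable fun ω => Xt ω i := h.measurable_Xt.eval
  have hY : Measurable fun ω => Y ω i := h.measurable_Y.eval
  have hB := h.measurable_interleave_WK i
  have hY_letter : (fun ω => Y ω i).FactorsThrough fun ω => (Xt ω i, X ω i, Y ω i, Z ω i) :=
    fun ω ω' hω => by grind
  rw [condEntropyRV_sub_condEntropyRV hY hXt (h.measurable_auxU i),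
    condEntropyRV_sub_condEntropyRV hY hXt hB, h.condEntropyRV_letter_auxU i hY_letter,
    h.condEntropyRV_letter_interleave i hY_letter, ← h.condEntropyRV_Xt_pasts_prodMk i]
  refine sub_le_sub_left (condEntropyRV_le_of_factorsThrough hXt (by fun_prop) ?_) _
  intro ω ω' hω
  simp only [auxU, interleave, Prod.mk.injEq] at hω ⊢
  grind

lemma condMutualInfoRV_auxU (h : ConverseSetup μ Xt X Y Z K W) (i : Fin n) :
    condMutualInfoRV μ (auxU W K X Y Z i) (fun ω => Xt ω i) (fun ω => Z ω i)
      = entropyRV μ (fun ω => Xt ω i) - entropyRV μ (fun ω => Z ω i)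
        + condEntropyRV μ (fun ω => Z ω i) (auxU W K X Y Z i)
        - condEntropyRV μ (fun ω => Xt ω i) (auxU W K X Y Z i) := by
  have hXt : Measurable fun ω => Xt ω i := h.measurable_Xt.eval
  have hZ : Measurable fun ω => Z ω i := h.measurable_Z.eval
  have hU := h.measurable_auxU i
  have hswap := condEntropyRV_sub_condEntropyRV (μ := μ) hXt hZ hU
  rw [h.condEntropyRV_letter_auxU i fun ω ω' hω => by grind] at hswap
  have hcomm : condEntropyRV μ (fun ω => Xt ω i) (fun ω => (auxU W K X Y Z i ω, Z ω i))
      = condEntropyRV μ (fun ω => Xt ω i) (fun ω => (Z ω i, auxU W K X Y Z i ω)) :=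
    condEntropyRV_congr hXt (by fun_prop) (fun _ _ => by grind) (fun _ _ => by grind)
  have hpair : condEntropyRV μ (fun ω => Xt ω i) (fun ω => Z ω i)
      - condEntropyRV μ (fun ω => Z ω i) (fun ω => Xt ω i)
      = entropyRV μ (fun ω => Xt ω i) - entropyRV μ (fun ω => Z ω i) := by
    rw [condEntropyRV, condEntropyRV, entropyRV_swap hXt hZ]
    ring
  rw [condMutualInfoRV_eq_condEntropyRV_sub hU hXt hZ, hcomm]
  linarith

lemma condMutualInfoRV_auxU_add_sub_le (h : ConverseSetup μ Xt X Y Z K W) (i : Fin n) :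
    condMutualInfoRV μ (auxU W K X Y Z i) (fun ω => Xt ω i) (fun ω => Z ω i)
        + (condMutualInfoRV μ (auxU W K X Y Z i) (fun ω => Z ω i) (interleave W Y Z i)
          - condMutualInfoRV μ (auxU W K X Y Z i) (fun ω => Y ω i) (interleave W Y Z i))
      ≤ (condEntropyRV μ (fun ω => Z ω i) (interleave W Y Z i)
          - condEntropyRV μ (fun ω => Y ω i) (interleave W Y Z i))
        - (condEntropyRV μ (fun ω => Xt ω i) (interleave (fun ω => (W ω, K ω)) Y Xt i)
          - condEntropyRV μ (fun ω => Y ω i) (interleave (fun ω => (W ω, K ω)) Y Xt i))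
        + (entropyRV μ (fun ω => Xt ω i) - entropyRV μ (fun ω => Z ω i)) := by
  rw [h.condMutualInfoRV_auxU, h.condMutualInfoRV_auxU_interleave h.measurable_Z.eval,
    h.condMutualInfoRV_auxU_interleave h.measurable_Y.eval]
  linarith [h.condEntropyRV_Y_sub_condEntropyRV_Xt_le i]

end ConverseSetup

theorem secrecy_leakage_converse_small_key_general [IsProbabilityMeasure μ]
    [Fintype 𝒳t] [MeasurableSingletonClass 𝒳t] [Fintype 𝒳] [MeasurableSingletonClass 𝒳]
    [Fintype 𝒴] [MeasurableSingletonClass 𝒴] [Fintype 𝒵] [MeasurableSingletonClass 𝒵]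
    [Fintype 𝒦] [MeasurableSingletonClass 𝒦] [Fintype 𝒲] [MeasurableSpace 𝒲]
    [MeasurableSingletonClass 𝒲] (h : ConverseSetup μ Xt X Y Z K W) :
    condMutualInfoRV μ Xt W Z ≥
      ∑ i, (condMutualInfoRV μ (auxU W K X Y Z i) (fun ω => Xt ω i) (fun ω => Z ω i)
        + (condMutualInfoRV μ (auxU W K X Y Z i) (fun ω => Z ω i) (interleave W Y Z i)
          - condMutualInfoRV μ (auxU W K X Y Z i) (fun ω => Y ω i) (interleave W Y Z i)))
      - entropyRV μ K := by
  have hW := h.measurable_W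
  have hWK := hW.prodMk h.measurable_key
  refine sub_le_iff_le_add.2 <|
    (Finset.sum_le_sum fun i _ => h.condMutualInfoRV_auxU_add_sub_le i).trans ?_
  rw [Finset.sum_add_distrib, Finset.sum_sub_distrib,
    csiszar_sum_condEntropyRV hW h.measurable_Y h.measurable_Z,
    csiszar_sum_condEntropyRV hWK h.measurable_Y h.measurable_Xt, Finset.sum_sub_distrib,
    ← h.entropyRV_Xt, ← h.entropyRV_Z]
  have hY : condEntropyRV μ Y (fun ω => (W ω, K ω)) ≤ condEntropyRV μ Y W :=
    condEntropyRV_le_of_factorsThrough h.measurable_Y hWK fun _ _ => by grind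
  linarith [h.le_condMutualInfoRV_add_entropyRV_key]

lemma HasIIDLaw.converseSetup [IsProbabilityMeasure μ] [Fintype 𝒳t] [MeasurableSingletonClass 𝒳t]
    [Fintype 𝒳] [MeasurableSingletonClass 𝒳] [Fintype 𝒴] [MeasurableSingletonClass 𝒴]
    [Fintype 𝒵] [MeasurableSingletonClass 𝒵] [Countable 𝒦] [MeasurableSingletonClass 𝒦]
    {S : Ω → Fin n → 𝒳t × 𝒳 × 𝒴 × 𝒵} {p : 𝒳t × 𝒳 × 𝒴 × 𝒵 → ℝ} (h : HasIIDLaw μ S p)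
    (hp : ∑ s, p s = 1) (hS : Measurable S) (hK : Measurable K) (hKS : IndepRV μ K S)
    (enc : (Fin n → 𝒳t) → 𝒦 → 𝒲) :
    ConverseSetup μ (fun ω j => (S ω j).1) (fun ω j => (S ω j).2.1) (fun ω j => (S ω j).2.2.1)
      (fun ω j => (S ω j).2.2.2) K (fun ω => enc (fun j => (S ω j).1) (K ω)) where
  measurable_letters := hS
  measurable_key := hK
  iIndepFun_letters := h.iIndepFun hS hp
  indepFun_key := (indepRV_iff_indepFun hK hS).1 hKS
  message_factorsThrough _ _ hω := by simp_all

end Converse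

lemma sum_jointLaw_eq_one {𝒳 𝒳t 𝒯 : Type*} [Fintype 𝒳] [Fintype 𝒳t] [Fintype 𝒯]
    {pX : 𝒳 → ℝ} {pXt : 𝒳 → 𝒳t → ℝ} {pT : 𝒳 → 𝒯 → ℝ} (hpX : ∑ x, pX x = 1)
    (hpXt : ∀ x, ∑ a, pXt x a = 1) (hpT : ∀ x, ∑ t, pT x t = 1) :
    ∑ s : 𝒳t × 𝒳 × 𝒯, pX s.2.1 * pXt s.2.1 s.1 * pT s.2.1 s.2.2 = 1 := by
  rw [Fintype.sum_prod_type_right, Fintype.sum_prod_type]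
  simp only [← Finset.sum_mul, ← Finset.mul_sum, hpXt, hpT, mul_one, hpX]

/-- **Secrecy-leakage converse bound (small key regime)**: under the converse setup,
`I(X̃ⁿ; W | Zⁿ) ≥ ∑ᵢ ( I(Uᵢ; X̃ᵢ | Zᵢ) + [I(Uᵢ; Zᵢ | Vᵢ) − I(Uᵢ; Yᵢ | Vᵢ)]⁻ ) − H(K)`. -/
theorem secrecy_leakage_converse_small_key
    {𝒳 𝒳t 𝒴 𝒵 𝒲 𝒦 : Type}
    [Fintype 𝒳] [Fintype 𝒳t] [Fintype 𝒴] [Fintype 𝒵] [Fintype 𝒲] [Fintype 𝒦]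
    [MeasurableSpace 𝒳] [DiscreteMeasurableSpace 𝒳]
    [MeasurableSpace 𝒳t] [DiscreteMeasurableSpace 𝒳t]
    [MeasurableSpace 𝒴] [DiscreteMeasurableSpace 𝒴]
    [MeasurableSpace 𝒵] [DiscreteMeasurableSpace 𝒵]
    [MeasurableSpace 𝒲] [DiscreteMeasurableSpace 𝒲]
    [MeasurableSpace 𝒦] [DiscreteMeasurableSpace 𝒦]
    {Ω : Type} [MeasurableSpace Ω] (μ : MeasureTheory.Measure Ω)
    [MeasureTheory.IsProbabilityMeasure μ]
    {n : ℕ} (S : Ω → Fin n → 𝒳t × 𝒳 × 𝒴 × 𝒵) (K : Ω → 𝒦)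
    (hSmeas : Measurable S) (hKmeas : Measurable K)
    (pX : 𝒳 → ℝ) (pXt : 𝒳 → 𝒳t → ℝ) (pYZ : 𝒳 → 𝒴 × 𝒵 → ℝ)
    (hpX0 : ∀ x, 0 ≤ pX x) (hpX1 : ∑ x, pX x = 1)
    (hpXt0 : ∀ x a, 0 ≤ pXt x a) (hpXt1 : ∀ x, ∑ a, pXt x a = 1)
    (hpYZ0 : ∀ x yz, 0 ≤ pYZ x yz) (hpYZ1 : ∀ x, ∑ yz, pYZ x yz = 1)
    (hiid : HasIIDLaw μ S (fun s => pX s.2.1 * pXt s.2.1 s.1 * pYZ s.2.1 s.2.2))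
    (hKunif : UniformRV μ K) (hKind : IndepRV μ K S)
    (enc : (Fin n → 𝒳t) → 𝒦 → 𝒲)
    :
    condMutualInfoRV μ (fun ω => fun j => (S ω j).1)
      (fun ω => enc (fun j => (S ω j).1) (K ω))
      (fun ω => fun j => (S ω j).2.2.2)
    ≥ (∑ i : Fin n,
        (condMutualInfoRV μ
          (fun ω => (enc (fun j => (S ω j).1) (K ω),
          (fun j : {j : Fin n // i < j} => (S ω j.1).2.2.1),
          (fun j : {j : Fin n // j.1 < i} => (S ω j.1).2.2.2),
          (fun j : {j : Fin n // j.1 < i} => (S ω j.1).2.1),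
          K ω))
          (fun ω => (S ω i).1) (fun ω => (S ω i).2.2.2)
        + negPartR (condMutualInfoRV μ
            (fun ω => (enc (fun j => (S ω j).1) (K ω),
          (fun j : {j : Fin n // i < j} => (S ω j.1).2.2.1),
          (fun j : {j : Fin n // j.1 < i} => (S ω j.1).2.2.2),
          (fun j : {j : Fin n // j.1 < i} => (S ω j.1).2.1),
          K ω))
            (fun ω => (S ω i).2.2.2)
            (fun ω => (enc (fun j => (S ω j).1) (K ω),
          (fun j : {j : Fin n // i < j} => (S ω j.1).2.2.1),
          (fun j : {j : Fin n // j.1 < i} => (S ω j.1).2.2.2)))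
          - condMutualInfoRV μ
            (fun ω => (enc (fun j => (S ω j).1) (K ω),
          (fun j : {j : Fin n // i < j} => (S ω j.1).2.2.1),
          (fun j : {j : Fin n // j.1 < i} => (S ω j.1).2.2.2),
          (fun j : {j : Fin n // j.1 < i} => (S ω j.1).2.1),
          K ω))
            (fun ω => (S ω i).2.2.1)
            (fun ω => (enc (fun j => (S ω j).1) (K ω),
          (fun j : {j : Fin n // i < j} => (S ω j.1).2.2.1),
          (fun j : {j : Fin n // j.1 < i} => (S ω j.1).2.2.2))))))
      - entropyRV μ K := by
  have hsetup := hiid.converseSetup (sum_jointLaw_eq_one hpX1 hpXt1 hpYZ1) hSmeas hKmeas hKind enc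
  refine le_trans ?_ (secrecy_leakage_converse_small_key_general hsetup)
  exact sub_le_sub_right (Finset.sum_le_sum fun i _ => add_le_add_right (min_le_left _ _) _) _
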